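/- arXiv:1501.01389 — 2 statements merged into one kernel-verified Lean document; each statement's English description precedes it below -/
import Mathlib

section
/- Let C and D be abelian categories, let G : C ⥤ D be an additive functor admitting a left adjoint F : D ⥤ C, and suppose that F is exact and resolving. Then for every n ∈ ℕ and all objects X, Y of C there is an isomorphism of abelian groups Ext^n_C(F(G(X)), Y) ≅ Ext^n_D(G(X), G(Y)). -/
open CategoryTheory Limits

universe w v u v' u'

universe t

/-!
A right adjoint preserves limits, so `G` is exact as soon as it preserves epimorphisms. An
adjunction of exact functors extends degreewise to cochain complexes and, since both functors
preserve quasi-isomorphisms, descends to the derived categories; its hom-set bijection between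
stalk complexes is the isomorphism on `Ext`. That `F` is resolving enters only to see that `G`
preserves epimorphisms: if `p : P ⟶ G.obj B` is an epimorphism and `F.obj P` is projective, the
transpose `F.obj P ⟶ B` of `p` lifts along any epimorphism `f : A ⟶ B`, so `p` factors through
`G.map f`.
-/

theorem preservesEpimorphisms_of_adjunction_of_exists_epi_of_projective_obj
    {C : Type u} [Category.{v} C] {D : Type u'} [Category.{v'} D] {F : D ⥤ C} {G : C ⥤ D}
    (adj : F ⊣ G) (h : ∀ Z : D, ∃ (P : D) (p : P ⟶ Z), Epi p ∧ Projective (F.obj P)) :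
    G.PreservesEpimorphisms where
  preserves {A B} f _ := by
    obtain ⟨P, p, _, _⟩ := h (G.obj B)
    let lift : F.obj P ⟶ A := Projective.factorThru ((adj.homEquiv P B).symm p) f
    have fac : adj.homEquiv P A lift ≫ G.map f = p := by
      rw [← adj.homEquiv_naturality_right, Projective.factorThru_comp, Equiv.apply_symm_apply]
    exact epi_of_epi_fac fac

/-- The adjunction between categories of homological complexes obtained by applying an adjunction
degreewise. -/
def mapHomologicalComplexAdjunction
    {C : Type u} [Category.{v} C] [HasZeroMorphisms C]
    {D : Type u'} [Category.{v'} D] [HasZeroMorphisms D] {F : D ⥤ C} {G : C ⥤ D}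
    [F.PreservesZeroMorphisms] [G.PreservesZeroMorphisms] (adj : F ⊣ G)
    {ι : Type*} (c : ComplexShape ι) :
    F.mapHomologicalComplex c ⊣ G.mapHomologicalComplex c where
  unit.app K :=
    { f i := adj.unit.app (K.X i)
      comm' _ _ _ := (adj.unit.naturality _).symm }
  unit.naturality _ _ φ := HomologicalComplex.hom_ext _ _ fun i ↦ adj.unit.naturality (φ.f i)
  counit.app K :=
    { f i := adj.counit.app (K.X i)
      comm' _ _ _ := (adj.counit.naturality _).symm }
  counit.naturality _ _ φ := HomologicalComplex.hom_ext _ _ fun i ↦ adj.counit.naturality (φ.f i)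
  left_triangle_components K :=
    HomologicalComplex.hom_ext _ _ fun i ↦ adj.left_triangle_components (K.X i)
  right_triangle_components K :=
    HomologicalComplex.hom_ext _ _ fun i ↦ adj.right_triangle_components (K.X i)

section ExactAdjunction

variable {C : Type u} [Category.{v} C] [Abelian C] {D : Type u'} [Category.{v'} D] [Abelian D]
  {F : D ⥤ C} {G : C ⥤ D}

theorem preservesFiniteColimits_of_preservesEpimorphisms
    (G : C ⥤ D) [PreservesFiniteLimits G] [G.PreservesEpimorphisms] :
    PreservesFiniteColimits G := by
  have : G.Additive := Functor.additive_of_preserves_binary_products G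
  have := Functor.preservesHomology_of_preservesEpis_and_kernels G
  exact G.preservesFiniteColimits_of_preservesHomology

variable [F.Additive] [G.Additive] [PreservesFiniteLimits F] [PreservesFiniteColimits F]
  [PreservesFiniteLimits G] [PreservesFiniteColimits G]

/-- The adjunction between derived categories induced by an adjunction of exact functors. -/
noncomputable def mapDerivedCategoryAdjunction [HasDerivedCategory.{w} C]
    [HasDerivedCategory.{t} D] (adj : F ⊣ G) : F.mapDerivedCategory ⊣ G.mapDerivedCategory :=
  letI : CatCommSq (F.mapHomologicalComplex (.up ℤ)) DerivedCategory.Q DerivedCategory.Q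
    F.mapDerivedCategory := ⟨F.mapDerivedCategoryFactors.symm⟩
  letI : CatCommSq (G.mapHomologicalComplex (.up ℤ)) DerivedCategory.Q DerivedCategory.Q
    G.mapDerivedCategory := ⟨G.mapDerivedCategoryFactors.symm⟩
  (mapHomologicalComplexAdjunction adj (.up ℤ)).localization
    DerivedCategory.Q (HomologicalComplex.quasiIso D (.up ℤ))
    DerivedCategory.Q (HomologicalComplex.quasiIso C (.up ℤ))
    F.mapDerivedCategory G.mapDerivedCategory

/-- The isomorphism `Ext^n(F Z, Y) ≃+ Ext^n(Z, G Y)` for exact functors `F ⊣ G`: the adjunction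
isomorphism of the derived categories applied to stalk complexes. -/
noncomputable def extAddEquivOfAdjunction [HasExt.{w} C] [HasExt.{t} D] (adj : F ⊣ G)
    (Z : D) (Y : C) (n : ℕ) :
    Abelian.Ext (F.obj Z) Y n ≃+ Abelian.Ext Z (G.obj Y) n :=
  letI := HasDerivedCategory.standard C
  letI := HasDerivedCategory.standard D
  let stalkZ := (DerivedCategory.singleFunctor D 0).obj Z
  let stalkY := (DerivedCategory.singleFunctor C 0).obj Y
  let isoF : (DerivedCategory.singleFunctor C 0).obj (F.obj Z) ≅ F.mapDerivedCategory.obj stalkZ :=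
    ((F.mapDerivedCategorySingleFunctor 0).app Z).symm
  let isoG : G.mapDerivedCategory.obj (stalkY⟦(n : ℤ)⟧) ≅
      ((DerivedCategory.singleFunctor D 0).obj (G.obj Y))⟦(n : ℤ)⟧ :=
    (G.mapDerivedCategory.commShiftIso (n : ℤ)).app stalkY ≪≫
      (shiftFunctor _ (n : ℤ)).mapIso ((G.mapDerivedCategorySingleFunctor 0).app Y)
  Abelian.Ext.homAddEquiv.trans <|
    (Linear.homCongr ℤ isoF (Iso.refl (stalkY⟦(n : ℤ)⟧))).toAddEquiv.trans <|
    ((mapDerivedCategoryAdjunction adj).homAddEquiv stalkZ (stalkY⟦(n : ℤ)⟧)).trans <|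
    (Linear.homCongr ℤ (Iso.refl stalkZ) isoG).toAddEquiv.trans
    Abelian.Ext.homAddEquiv.symm

end ExactAdjunction

theorem statement0_general
    {C : Type u} [Category.{v} C] [Abelian C] [HasExt.{w} C]
    {D : Type u'} [Category.{v'} D] [Abelian D] [HasExt.{t} D]
    (G : C ⥤ D) (F : D ⥤ C) (adj : F ⊣ G)
    [PreservesFiniteLimits F] [G.PreservesEpimorphisms] (n : ℕ) (Z : D) (Y : C) :
    Nonempty (Abelian.Ext (F.obj Z) Y n ≃+ Abelian.Ext Z (G.obj Y) n) := by
  have : PreservesColimits F := adj.leftAdjoint_preservesColimits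
  have : PreservesLimits G := adj.rightAdjoint_preservesLimits
  have : F.Additive := Functor.additive_of_preserves_binary_products F
  have : G.Additive := adj.right_adjoint_additive
  have : PreservesFiniteColimits G :=
    preservesFiniteColimits_of_preservesEpimorphisms G
  exact ⟨extAddEquivOfAdjunction adj Z Y n⟩

/-- If `G : C ⥤ D` is an additive functor between abelian categories
admitting a left adjoint `F : D ⥤ C` which is exact and resolving, then for every
`n : ℕ` and objects `X Y : C` there is an isomorphism of abelian groups
`Ext^n_C(F(G(X)), Y) ≅ Ext^n_D(G(X), G(Y))`. -/
theorem statement0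
    {C : Type u} [Category.{v} C] [Abelian C] [HasExt.{w} C]
    {D : Type u'} [Category.{v'} D] [Abelian D] [HasExt.{w} D]
    (G : C ⥤ D) [G.Additive] (F : D ⥤ C) (adj : F ⊣ G)
    [PreservesFiniteLimits F] [PreservesFiniteColimits F]
    (hres : ∀ Z : D, ∃ (P : D) (p : P ⟶ Z),
      Epi p ∧ Projective P ∧ Projective (F.obj P))
    (n : ℕ) (X Y : C) :
    Nonempty (Abelian.Ext (F.obj (G.obj X)) Y n ≃+ Abelian.Ext (G.obj X) (G.obj Y) n) := by
  have := preservesEpimorphisms_of_adjunction_of_exists_epi_of_projective_obj adj fun Z ↦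
    (hres Z).imp fun _ ⟨p, hp, _, hFP⟩ ↦ ⟨p, hp, hFP⟩
  exact statement0_general G F adj n (G.obj X) Y
end

section
/- The following are equivalent for objects X, W of C: (a) Sha^1(X, W) = 0, i.e. the map ε_X^* : Ext^1_C(X, W) → Ext^1_C(T X, W) is injective; (b) for every short exact sequence 0 → W → E → X → 0 in C, the sequence admits a splitting (the monomorphism W → E admits a retraction) if and only if, for every i ∈ I, its image 0 → G_i(W) → G_i(E) → G_i(X) → 0 under G_i admits a splitting in C_i. -/
/-!
The adjunction bijection `Hom(F_i G_i X, E) ≃ Hom(G_i X, G_i E)` turns lifts of the counit along an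
epimorphism `π : E ⟶ X` into sections of `G_i π`, so `ε_X` lifts along `π` exactly when every
`G_i π` splits. On the other hand `ε_X` lifts along `π` exactly when `ε_X^*` kills the class of the
extension `E`. Since every class in `Ext¹(X, W)` is the class of an extension (complete the
corresponding morphism `X ⟶ W⟦1⟧` of the derived category to a triangle, whose middle term lies in
the heart), the kernel of `ε_X^*` consists of the extensions that become split under all the `G_i`.
-/

open CategoryTheory Limits

attribute [local instance] CategoryTheory.Abelian.hasFiniteBiproducts

universe w v u v' u'

variable {C : Type u} [Category.{v} C] [Abelian C]
variable {I : Type} [Fintype I]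
variable {Ci : I → Type u'} [∀ i, Category.{v'} (Ci i)] [∀ i, Abelian (Ci i)]

/-- The biproduct `T X = ⊕_{i ∈ I} F_i (G_i X)`. -/
noncomputable def T (F : ∀ i, Ci i ⥤ C) (G : ∀ i, C ⥤ Ci i) (X : C) : C :=
  ⨁ (fun i => (F i).obj ((G i).obj X))

/-- The canonical map `ε_X : T X ⟶ X` whose component on `F_i (G_i X)` is the counit
of the adjunction `F_i ⊣ G_i` at `X`. -/
noncomputable def eps (F : ∀ i, Ci i ⥤ C) (G : ∀ i, C ⥤ Ci i)
    (adj : ∀ i, F i ⊣ G i) (X : C) : T F G X ⟶ X :=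
  biproduct.desc (fun i => (adj i).counit.app X)

section Heart

open Pretriangulated Triangulated DerivedCategory

variable {A D : Type*} [Category* A] [Category* D] [HasZeroObject D] [Preadditive D]
  [HasShift D ℤ] [∀ n : ℤ, (shiftFunctor D n).Additive] [Pretriangulated D]
  (Φ : A ⥤ D) [Φ.Full] [Φ.Faithful]

lemma shortExact_of_map_distinguished [Abelian A] [Φ.Additive]
    (hΦ : ∀ ⦃X Y : A⦄ ⦃n : ℤ⦄ (f : Φ.obj X ⟶ (Φ.obj Y)⟦n⟧), n < 0 → f = 0)
    (S : ShortComplex A) {δ : Φ.obj S.X₃ ⟶ (Φ.obj S.X₁)⟦(1 : ℤ)⟧}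
    (hδ : Triangle.mk (Φ.map S.f) (Φ.map S.g) δ ∈ distTriang D) : S.ShortExact := by
  have kernel := AbelianSubcategory.isLimitKernelForkOfDistTriang hΦ S.f S.g δ hδ
  have cokernel := AbelianSubcategory.isColimitCokernelCoforkOfDistTriang hΦ S.f S.g δ hδ
  exact .mk' (S.exact_of_f_is_kernel kernel) (mono_of_isLimit_fork kernel)
    (epi_of_isColimit_cofork cokernel)

lemma mor₃_eq_of_map_distinguished {X Y Z : A} {f : X ⟶ Y} {g : Y ⟶ Z} [Epi g]
    {δ δ' : Φ.obj Z ⟶ (Φ.obj X)⟦(1 : ℤ)⟧}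
    (hδ : Triangle.mk (Φ.map f) (Φ.map g) δ ∈ distTriang D)
    (hδ' : Triangle.mk (Φ.map f) (Φ.map g) δ' ∈ distTriang D) : δ = δ' := by
  obtain ⟨c, hgc, hδc⟩ : ∃ c : Φ.obj Z ⟶ Φ.obj Z,
      Φ.map g ≫ c = 𝟙 _ ≫ Φ.map g ∧ δ ≫ (𝟙 (Φ.obj X))⟦(1 : ℤ)⟧' = c ≫ δ' :=
    complete_distinguished_triangle_morphism _ _ hδ hδ' (𝟙 _) (𝟙 _)
      ((Category.comp_id _).trans (Category.id_comp _).symm)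
  obtain ⟨c, rfl⟩ := Φ.map_surjective c
  have hc : c = 𝟙 Z := by
    rw [← cancel_epi g]
    exact Φ.map_injective (by simpa using hgc)
  simpa [hc] using hδc

variable [HasDerivedCategory.{w} C]

lemma singleFunctor_hom_shift_eq_zero {X Y : C} {n : ℤ}
    (f : (singleFunctor C 0).obj X ⟶ ((singleFunctor C 0).obj Y)⟦n⟧) (hn : n < 0) : f = 0 := by
  have : TStructure.t.IsGE (((singleFunctor C 0).obj Y)⟦n⟧) (-n) :=
    TStructure.t.isGE_shift _ 0 n (-n)
  exact TStructure.t.zero f 0 (-n)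

lemma exists_singleFunctor_distinguished {X W : C}
    (h : (singleFunctor C 0).obj X ⟶ ((singleFunctor C 0).obj W)⟦(1 : ℤ)⟧) :
    ∃ (E : C) (ι : W ⟶ E) (π : E ⟶ X),
      Triangle.mk ((singleFunctor C 0).map ι) ((singleFunctor C 0).map π) h ∈
        distTriang (DerivedCategory C) := by
  obtain ⟨Y, f, g, hT⟩ := distinguished_cocone_triangle₂ h
  have : Y.IsLE 0 := TStructure.t.isLE₂ _ hT 0
    (inferInstanceAs (((singleFunctor C 0).obj W).IsLE 0))
    (inferInstanceAs (((singleFunctor C 0).obj X).IsLE 0))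
  have : Y.IsGE 0 := TStructure.t.isGE₂ _ hT 0
    (inferInstanceAs (((singleFunctor C 0).obj W).IsGE 0))
    (inferInstanceAs (((singleFunctor C 0).obj X).IsGE 0))
  obtain ⟨E, ⟨e⟩⟩ := exists_iso_singleFunctor_obj_of_isGE_of_isLE Y 0
  obtain ⟨ι, hι⟩ := (singleFunctor C 0).map_surjective (f ≫ e.hom)
  obtain ⟨π, hπ⟩ := (singleFunctor C 0).map_surjective (e.inv ≫ g)
  refine ⟨E, ι, π, isomorphic_distinguished _ hT _
    (Triangle.isoMk _ _ (Iso.refl _) e.symm (Iso.refl _) ?_ ?_ ?_)⟩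
  · change (singleFunctor C 0).map ι ≫ e.inv = 𝟙 _ ≫ f
    simp [hι]
  · change (singleFunctor C 0).map π ≫ 𝟙 _ = e.inv ≫ g
    simp [hπ]
  · change h ≫ (𝟙 _)⟦(1 : ℤ)⟧' = 𝟙 _ ≫ h
    simp

end Heart

section ExtensionClass

open Pretriangulated DerivedCategory Abelian

variable [HasExt.{w} C]

lemma exists_extClass_eq {X W : C} (e : Ext.{w} X W 1) :
    ∃ (E : C) (ι : W ⟶ E) (π : E ⟶ X) (hw : ι ≫ π = 0)
      (hS : (ShortComplex.mk ι π hw).ShortExact), hS.extClass = e := by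
  let _ := HasDerivedCategory.standard C
  obtain ⟨E, ι, π, hT⟩ := exists_singleFunctor_distinguished (e.hom :)
  have hw : ι ≫ π = 0 := (singleFunctor C 0).map_injective <| by
    rw [Functor.map_comp, Functor.map_zero]
    exact comp_distTriang_mor_zero₁₂ _ hT
  have hS : (ShortComplex.mk ι π hw).ShortExact :=
    shortExact_of_map_distinguished (singleFunctor C 0)
      (fun _ _ _ ↦ singleFunctor_hom_shift_eq_zero) _ hT
  have := hS.epi_g
  refine ⟨E, ι, π, hw, hS, ?_⟩
  ext
  rw [hS.extClass_hom]
  exact mor₃_eq_of_map_distinguished (singleFunctor C 0) hS.singleTriangle_distinguished hT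

lemma mk₀_comp_extClass_eq_zero_iff {S : ShortComplex C} (hS : S.ShortExact)
    {A : C} (a : A ⟶ S.X₃) :
    (Ext.mk₀ a).comp (hS.extClass : Ext.{w} _ _ _) (zero_add 1) = 0 ↔
      ∃ s : A ⟶ S.X₂, s ≫ S.g = a := by
  constructor
  · intro h
    obtain ⟨s, hs⟩ := Ext.covariant_sequence_exact₃ A hS (Ext.mk₀ a) (zero_add 1) h
    obtain ⟨s, rfl⟩ := (Ext.mk₀_bijective _ _).surjective s
    exact ⟨s, (Ext.mk₀_bijective _ _).injective (by rw [← hs, Ext.mk₀_comp_mk₀])⟩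
  · rintro ⟨s, rfl⟩
    rw [← Ext.mk₀_comp_mk₀, Ext.comp_assoc_of_second_deg_zero, hS.comp_extClass, Ext.comp_zero]

lemma extClass_comp_mk₀_eq_zero_iff {S : ShortComplex C} (hS : S.ShortExact)
    {B : C} (b : S.X₁ ⟶ B) :
    (hS.extClass : Ext.{w} _ _ _).comp (Ext.mk₀ b) (add_zero 1) = 0 ↔
      ∃ r : S.X₂ ⟶ B, S.f ≫ r = b := by
  constructor
  · intro h
    obtain ⟨r, hr⟩ := Ext.contravariant_sequence_exact₁ hS B (Ext.mk₀ b) (add_zero 1) h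
    obtain ⟨r, rfl⟩ := (Ext.mk₀_bijective _ _).surjective r
    exact ⟨r, (Ext.mk₀_bijective _ _).injective (by rw [← hr, Ext.mk₀_comp_mk₀])⟩
  · rintro ⟨r, rfl⟩
    rw [← Ext.mk₀_comp_mk₀, hS.extClass_comp_assoc]

lemma extClass_eq_zero_iff {S : ShortComplex C} (hS : S.ShortExact) :
    (hS.extClass : Ext.{w} _ _ _) = 0 ↔ ∃ r : S.X₂ ⟶ S.X₁, S.f ≫ r = 𝟙 S.X₁ := by
  simpa using extClass_comp_mk₀_eq_zero_iff.{w} hS (𝟙 S.X₁)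

lemma injective_mk₀_comp_iff {A X W : C} (a : A ⟶ X) :
    (Function.Injective fun e : Ext.{w} X W 1 ↦ (Ext.mk₀ a).comp e (zero_add 1)) ↔
      ∀ (E : C) (ι : W ⟶ E) (π : E ⟶ X) (hw : ι ≫ π = 0),
        (ShortComplex.mk ι π hw).ShortExact →
          (∃ s : A ⟶ E, s ≫ π = a) → ∃ r : E ⟶ W, ι ≫ r = 𝟙 W := by
  refine (injective_iff_map_eq_zero ((Ext.mk₀ a).precomp W (zero_add 1))).trans ⟨?_, ?_⟩
  · intro h E ι π hw hS hs
    exact (extClass_eq_zero_iff.{w} hS).1 (h _ ((mk₀_comp_extClass_eq_zero_iff.{w} hS a).2 hs))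
  · intro h e he
    obtain ⟨E, ι, π, hw, hS, rfl⟩ := exists_extClass_eq e
    exact (extClass_eq_zero_iff.{w} hS).2
      (h E ι π hw hS ((mk₀_comp_extClass_eq_zero_iff.{w} hS a).1 he))

end ExtensionClass

section Splitting

lemma exists_retraction_iff_exists_section {A : Type*} [Category* A] [Preadditive A] [Balanced A]
    {S : ShortComplex A} (hS : S.ShortExact) :
    (∃ r : S.X₂ ⟶ S.X₁, S.f ≫ r = 𝟙 S.X₁) ↔ ∃ s : S.X₃ ⟶ S.X₂, s ≫ S.g = 𝟙 S.X₃ := by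
  constructor
  · rintro ⟨r, hr⟩
    let splitting := ShortComplex.Splitting.ofExactOfRetraction S hS.exact r hr hS.epi_g
    exact ⟨splitting.s, splitting.s_g⟩
  · rintro ⟨s, hs⟩
    let splitting := ShortComplex.Splitting.ofExactOfSection S hS.exact s hs hS.mono_f
    exact ⟨splitting.r, splitting.f_r⟩

lemma exists_lift_counit_iff_exists_section_map {A B : Type*} [Category* A] [Category* B]
    {F : A ⥤ B} {G : B ⥤ A} (adj : F ⊣ G) {E X : B} (π : E ⟶ X) :
    (∃ s : F.obj (G.obj X) ⟶ E, s ≫ π = adj.counit.app X) ↔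
      ∃ t : G.obj X ⟶ G.obj E, t ≫ G.map π = 𝟙 (G.obj X) := by
  refine (adj.homEquiv _ _).exists_congr fun s ↦ ?_
  rw [← adj.homEquiv_naturality_right, ← adj.homEquiv_symm_id, Equiv.eq_symm_apply]

lemma exists_lift_biproduct_desc_iff {A : Type*} [Category* A] [HasZeroMorphisms A] {J : Type*}
    (Y : J → A) [HasBiproduct Y] {E X : A} (π : E ⟶ X) (c : ∀ j, Y j ⟶ X) :
    (∃ s : ⨁ Y ⟶ E, s ≫ π = biproduct.desc c) ↔ ∀ j, ∃ s : Y j ⟶ E, s ≫ π = c j := by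
  constructor
  · rintro ⟨s, hs⟩ j
    exact ⟨biproduct.ι Y j ≫ s, by rw [Category.assoc, hs, biproduct.ι_desc]⟩
  · intro h
    choose s hs using h
    exact ⟨biproduct.desc s, biproduct.hom_ext' _ _ fun j ↦ by simp [hs]⟩

lemma shortExact_map_of_adjunction {A B : Type*} [Category* A] [Preadditive A]
    [CategoryWithHomology A] [Category* B] [Preadditive B] [Balanced B]
    {F : A ⥤ B} {G : B ⥤ A} (adj : F ⊣ G) [G.PreservesEpimorphisms] [G.PreservesZeroMorphisms]
    {S : ShortComplex B} (hS : S.ShortExact) : (S.map G).ShortExact := by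
  have := adj.rightAdjoint_preservesLimits
  have := hS.mono_f
  have := hS.epi_g
  exact .mk' (hS.exact.map_of_mono_of_preservesKernel G hS.mono_f inferInstance)
    (inferInstanceAs (Mono (G.map S.f))) (inferInstanceAs (Epi (G.map S.g)))

lemma exists_lift_eps_iff (F : ∀ i, Ci i ⥤ C) (G : ∀ i, C ⥤ Ci i) (adj : ∀ i, F i ⊣ G i)
    [∀ i, (G i).PreservesEpimorphisms] {S : ShortComplex C} (hS : S.ShortExact) :
    (∃ s : T F G S.X₃ ⟶ S.X₂, s ≫ S.g = eps F G adj S.X₃) ↔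
      ∀ i, ∃ r : (G i).obj S.X₂ ⟶ (G i).obj S.X₁, (G i).map S.f ≫ r = 𝟙 ((G i).obj S.X₁) := by
  refine (exists_lift_biproduct_desc_iff _ S.g _).trans (forall_congr' fun i ↦ ?_)
  have := (adj i).isRightAdjoint
  rw [exists_lift_counit_iff_exists_section_map]
  exact (exists_retraction_iff_exists_section (shortExact_map_of_adjunction (adj i) hS)).symm

end Splitting

theorem statement1_general [HasExt.{w} C]
    (F : ∀ i, Ci i ⥤ C) (G : ∀ i, C ⥤ Ci i) (adj : ∀ i, F i ⊣ G i)
    [∀ i, (G i).PreservesEpimorphisms] (X W : C) :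
    (Function.Injective fun e : Abelian.Ext X W 1 ↦
        (Abelian.Ext.mk₀ (eps F G adj X)).comp e (zero_add 1)) ↔
      ∀ (E : C) (ι : W ⟶ E) (π : E ⟶ X) (hw : ι ≫ π = 0),
        (ShortComplex.mk ι π hw).ShortExact →
          ((∃ r : E ⟶ W, ι ≫ r = 𝟙 W) ↔
            ∀ i, ∃ r : (G i).obj E ⟶ (G i).obj W, (G i).map ι ≫ r = 𝟙 ((G i).obj W)) := by
  rw [injective_mk₀_comp_iff]
  refine forall₅_congr fun E ι π hw hS ↦ ?_
  have splits_map (hr : ∃ r : E ⟶ W, ι ≫ r = 𝟙 W) (i : I) :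
      ∃ r : (G i).obj E ⟶ (G i).obj W, (G i).map ι ≫ r = 𝟙 ((G i).obj W) := by
    obtain ⟨r, hr⟩ := hr
    exact ⟨(G i).map r, by rw [← Functor.map_comp, hr, (G i).map_id]⟩
  rw [exists_lift_eps_iff F G adj hS]
  exact ⟨fun h ↦ ⟨splits_map, h⟩, Iff.mpr⟩

/-- `Sha¹(X, W) = 0` (i.e. `ε_X^* : Ext¹(X, W) → Ext¹(T X, W)` is injective)
if and only if every short exact sequence `0 → W → E → X → 0` in `C` splits exactly when
its image under each `G_i` splits in `C_i`. -/
theorem statement1 [HasExt.{w} C]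
    (F : ∀ i, Ci i ⥤ C) (G : ∀ i, C ⥤ Ci i) (adj : ∀ i, F i ⊣ G i)
    [∀ i, (G i).Additive] [∀ i, (G i).Faithful]
    [∀ i, PreservesFiniteLimits (G i)] [∀ i, PreservesFiniteColimits (G i)]
    [∀ i, PreservesFiniteLimits (F i)] [∀ i, PreservesFiniteColimits (F i)]
    (hres : ∀ i (Z : Ci i), ∃ (P : Ci i) (p : P ⟶ Z),
      Epi p ∧ Projective P ∧ Projective ((F i).obj P))
    (X W : C) :
    (Function.Injective fun e : Abelian.Ext X W 1 =>
        (Abelian.Ext.mk₀ (eps F G adj X)).comp e (zero_add 1)) ↔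
      ∀ (E : C) (ι : W ⟶ E) (π : E ⟶ X) (hw : ι ≫ π = 0),
        (ShortComplex.mk ι π hw).ShortExact →
          ((∃ r : E ⟶ W, ι ≫ r = 𝟙 W) ↔
            ∀ i, ∃ r : (G i).obj E ⟶ (G i).obj W, (G i).map ι ≫ r = 𝟙 ((G i).obj W)) :=
  statement1_general F G adj X W
end
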